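/- There is an absolute constant C with the following property. Let p be an odd prime, r ≥ 1, q = p^r. Let f(x,y) = A x² + 2B x y + C y² and f₁(x,y) = A₁ x² + 2B₁ x y + C₁ y² be integral binary quadratic forms with p ∤ A, p ∤ A₁, AC − B² = a², A₁C₁ − B₁² = a₁² for nonzero integers a, a₁, and let u, v, u₁, v₁ be integers. Define the normalized sums S_f(q,b,u,v) = q^{−2} ∑_{x=0}^{q−1} ∑_{y=0}^{q−1} e_q(b·(f(x,y) − a) + u x + v y) and similarly S_{f₁}(q,b,u₁,v₁) with a replaced by a₁. Then |∑_{b=1, gcd(b,p)=1}^{q} S_f(q,b,u,v) · conj(S_{f₁}(q,b,u₁,v₁))| ≤ C · gcd(a², q)^{1/2} · gcd(a₁², q)^{1/2} · gcd(a − a₁, q)^{1/4} · q^{−5/4}. -/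

import Mathlib

/-- The additive character `e_q(x) = exp(2πi x / q)`. -/
noncomputable def eChar (q : ℕ) (x : ℤ) : ℂ :=
  Complex.exp (2 * Real.pi * Complex.I * (x : ℂ) / (q : ℂ))

/-- The normalized complete exponential sum
`S_f(q,b,u,v) = q⁻² ∑_{x,y mod q} e_q(b(f(x,y) − a) + ux + vy)` attached to the binary
quadratic form `f = A x² + 2B x y + C y²` (shifted by `a`). -/
noncomputable def Sform (q : ℕ) (A B C a b u v : ℤ) : ℂ :=
  ((q : ℂ) ^ 2)⁻¹ * ∑ x ∈ Finset.range q, ∑ y ∈ Finset.range q,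
    eChar q (b * (A * (x : ℤ) ^ 2 + 2 * B * x * y + C * y ^ 2 - a) + u * x + v * y)

open Finset


lemma sum_std (N : ℕ) [NeZero N] (c : ZMod N) :
    ∑ n : ZMod N, ZMod.stdAddChar (n * c) = if c = 0 then (N : ℂ) else 0 := by
  have := AddChar.sum_mulShift c (ZMod.isPrimitive_stdAddChar N)
  rw [this]; simp [ZMod.card]

lemma norm_std (N : ℕ) [NeZero N] (c : ZMod N) : ‖(ZMod.stdAddChar c : ℂ)‖ = 1 :=
  AddChar.norm_apply _ _

lemma moment (N : ℕ) [NeZero N] {ι : Type*} [Fintype ι] (w : ι → ℂ) (hw : ∀ i, ‖w i‖ ≤ 1)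
    (s h : ι → ZMod N) :
    ∑ n : ZMod N, ∑ m : ZMod N, ‖∑ i, w i * ZMod.stdAddChar (n * s i + m * h i)‖ ^ 2 ≤
      (N : ℝ) ^ 2 * ((univ.filter (fun x : ι × ι => s x.1 = s x.2 ∧ h x.1 = h x.2)).card : ℝ) := by
  classical
  have key : ((∑ n : ZMod N, ∑ m : ZMod N,
      ‖∑ i, w i * ZMod.stdAddChar (n * s i + m * h i)‖ ^ 2 : ℝ) : ℂ) =
      ∑ x : ι × ι, w x.1 * (starRingEnd ℂ) (w x.2) *
        ((if s x.1 - s x.2 = 0 then (N : ℂ) else 0) * (if h x.1 - h x.2 = 0 then (N : ℂ) else 0)) := by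
    push_cast
    have : ∀ n m : ZMod N, ((‖∑ i, w i * ZMod.stdAddChar (n * s i + m * h i)‖ : ℂ)) ^ 2 =
        ∑ x : ι × ι, w x.1 * (starRingEnd ℂ) (w x.2) *
          (ZMod.stdAddChar (n * (s x.1 - s x.2)) * ZMod.stdAddChar (m * (h x.1 - h x.2))) := by
      intro n m
      rw [← Complex.mul_conj', map_sum, Finset.sum_mul_sum, Fintype.sum_prod_type]
      refine Finset.sum_congr rfl fun i _ => Finset.sum_congr rfl fun j _ => ?_
      rw [map_mul, ← AddChar.map_neg_eq_conj]
      have : (ZMod.stdAddChar (n * (s i - s j)) * ZMod.stdAddChar (m * (h i - h j)) : ℂ) =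
          ZMod.stdAddChar (n * s i + m * h i) * ZMod.stdAddChar (-(n * s j + m * h j)) := by
        rw [← AddChar.map_add_eq_mul, ← AddChar.map_add_eq_mul]; congr 1; ring
      simp only [this]; ring
    simp_rw [this]
    have h2 : ∀ n : ZMod N, ∑ m : ZMod N, ∑ x : ι × ι, w x.1 * (starRingEnd ℂ) (w x.2) *
          (ZMod.stdAddChar (n * (s x.1 - s x.2)) * ZMod.stdAddChar (m * (h x.1 - h x.2)) : ℂ) =
        ∑ x : ι × ι, w x.1 * (starRingEnd ℂ) (w x.2) *
          (ZMod.stdAddChar (n * (s x.1 - s x.2)) * (if h x.1 - h x.2 = 0 then (N : ℂ) else 0)) := by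
      intro n
      rw [Finset.sum_comm]
      refine Finset.sum_congr rfl fun x _ => ?_
      rw [← Finset.mul_sum, ← Finset.mul_sum, sum_std]
    simp_rw [h2]
    rw [Finset.sum_comm]
    refine Finset.sum_congr rfl fun x _ => ?_
    rw [← Finset.mul_sum, ← Finset.sum_mul, sum_std]
  have hn : ∀ R : ℝ, R ≤ ‖(R : ℂ)‖ := fun R => by
    rw [Complex.norm_real]; exact le_abs_self R
  refine (hn _).trans ?_
  rw [key]
  refine (norm_sum_le _ _).trans ?_
  rw [Finset.card_filter, Nat.cast_sum, Finset.mul_sum]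
  refine Finset.sum_le_sum fun x _ => ?_
  rw [norm_mul, norm_mul, RCLike.norm_conj, norm_mul]
  simp only [sub_eq_zero]
  have h1 : ‖w x.1‖ * ‖w x.2‖ ≤ 1 := mul_le_one₀ (hw _) (norm_nonneg _) (hw _)
  by_cases ha : s x.1 = s x.2 <;> by_cases hb : h x.1 = h x.2 <;> simp [ha, hb]
  rw [← sq]
  exact mul_le_of_le_one_left (by positivity) h1

/-- fourth moment count -/
lemma count_quads (p : ℕ) [Fact p.Prime] :
    (univ.filter (fun x : ((ZMod p)ˣ × (ZMod p)ˣ) × ((ZMod p)ˣ × (ZMod p)ˣ) =>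
      (x.1.1 : ZMod p) + x.1.2 = x.2.1 + x.2.2 ∧
      ((x.1.1⁻¹ : (ZMod p)ˣ) : ZMod p) + (x.1.2⁻¹ : (ZMod p)ˣ) =
        (x.2.1⁻¹ : (ZMod p)ˣ) + (x.2.2⁻¹ : (ZMod p)ˣ))).card ≤ 3 * p ^ 2 := by
  classical
  let f1 : (ZMod p)ˣ × (ZMod p)ˣ → ((ZMod p)ˣ × (ZMod p)ˣ) × ((ZMod p)ˣ × (ZMod p)ˣ) := fun y => ((y.1, -y.1), (y.2, -y.2))
  let f2 : (ZMod p)ˣ × (ZMod p)ˣ → ((ZMod p)ˣ × (ZMod p)ˣ) × ((ZMod p)ˣ × (ZMod p)ˣ) := fun y => (y, y)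
  let f3 : (ZMod p)ˣ × (ZMod p)ˣ → ((ZMod p)ˣ × (ZMod p)ˣ) × ((ZMod p)ˣ × (ZMod p)ˣ) := fun y => (y, (y.2, y.1))
  have hsub : (univ.filter (fun x : ((ZMod p)ˣ × (ZMod p)ˣ) × ((ZMod p)ˣ × (ZMod p)ˣ) =>
      (x.1.1 : ZMod p) + x.1.2 = x.2.1 + x.2.2 ∧
      ((x.1.1⁻¹ : (ZMod p)ˣ) : ZMod p) + (x.1.2⁻¹ : (ZMod p)ˣ) =
        (x.2.1⁻¹ : (ZMod p)ˣ) + (x.2.2⁻¹ : (ZMod p)ˣ))) ⊆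
      univ.image f1 ∪ univ.image f2 ∪ univ.image f3 := by
    rintro ⟨⟨a, b⟩, ⟨c, d⟩⟩ hx
    simp only [mem_filter, mem_univ, true_and] at hx
    obtain ⟨h1, h2⟩ := hx
    simp only [mem_union, mem_image, mem_univ, true_and]
    have ha : (a : ZMod p) ≠ 0 := a.ne_zero
    have hb : (b : ZMod p) ≠ 0 := b.ne_zero
    have hc : (c : ZMod p) ≠ 0 := c.ne_zero
    have hd : (d : ZMod p) ≠ 0 := d.ne_zero
    simp only [Units.val_inv_eq_inv_val] at h2
    field_simp at h2
    have hdd : (d : ZMod p) = a + b - c := by rw [h1]; ring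
    have h3 : ((a : ZMod p) + b) * ((c - a) * (c - b)) = 0 := by
      rw [hdd] at h2
      linear_combination -h2
    rcases mul_eq_zero.mp h3 with h | h
    · left; left
      refine ⟨(a, c), ?_⟩
      have e1 : b = -a := by ext; push_cast; linear_combination h
      have e2 : d = -c := by ext; push_cast; linear_combination h - h1
      simp [f1, e1, e2]
    rcases mul_eq_zero.mp h with h | h
    · left; right
      have e1 : c = a := by ext; linear_combination h
      have e2 : d = b := by ext; linear_combination -h - h1
      exact ⟨(a, b), by simp [f2, e1, e2]⟩
    · right
      have e1 : c = b := by ext; linear_combination h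
      have e2 : d = a := by ext; linear_combination -h - h1
      exact ⟨(a, b), by simp [f3, e1, e2]⟩
  have hcard : (univ : Finset ((ZMod p)ˣ × (ZMod p)ˣ)).card ≤ p ^ 2 := by
    rw [card_univ, Fintype.card_prod, sq, ZMod.card_units]
    exact Nat.mul_le_mul (Nat.sub_le _ _) (Nat.sub_le _ _)
  refine (card_le_card hsub).trans ?_
  refine (card_union_le _ _).trans ?_
  have := card_union_le (univ.image f1) (univ.image f2)
  have := card_image_le (s := univ) (f := f1)
  have := card_image_le (s := univ) (f := f2)
  have := card_image_le (s := univ) (f := f3)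
  omega

open ZMod in
lemma kloos_prime (p : ℕ) [Fact p.Prime] (hp : 3 ≤ p) (W : (ZMod p)ˣ → ℂ) (hW : ∀ b, ‖W b‖ ≤ 1)
    (hsq : ∀ b s, W (b * s ^ 2) = W b) (n m : ZMod p) (hn : n ≠ 0) :
    ‖∑ b : (ZMod p)ˣ, W b * stdAddChar (n * (b : ZMod p) + m * ((b⁻¹ : (ZMod p)ˣ) : ZMod p))‖ ^ 4 ≤ 16 * (p : ℝ) ^ 3 := by
  classical
  set K : ZMod p → ZMod p → ℂ := fun n m =>
    ∑ b : (ZMod p)ˣ, W b * stdAddChar (n * (b : ZMod p) + m * ((b⁻¹ : (ZMod p)ˣ) : ZMod p)) with hK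
  have hinv : ∀ t : (ZMod p)ˣ, K (n * (t ^ 2 : (ZMod p)ˣ)) (m * ((t ^ 2)⁻¹ : (ZMod p)ˣ)) = K n m := by
    intro t
    simp only [hK]
    refine Fintype.sum_equiv (Equiv.mulRight (t ^ 2)) _ _ fun b => ?_
    rw [Equiv.coe_mulRight, hsq, mul_inv]
    congr 2
    push_cast
    ring
  have hmom : ∑ n : ZMod p, ∑ m : ZMod p, ‖K n m‖ ^ 4 ≤ (p : ℝ) ^ 2 * (3 * p ^ 2 : ℕ) := by
    have h1 := moment p (ι := (ZMod p)ˣ × (ZMod p)ˣ) (fun x => W x.1 * W x.2)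
      (fun x => by rw [norm_mul]; exact mul_le_one₀ (hW _) (norm_nonneg _) (hW _))
      (fun x => (x.1 : ZMod p) + x.2)
      (fun x => ((x.1⁻¹ : (ZMod p)ˣ) : ZMod p) + ((x.2⁻¹ : (ZMod p)ˣ) : ZMod p))
    have h2 : ∀ n m : ZMod p, ‖K n m‖ ^ 4 = ‖∑ i : (ZMod p)ˣ × (ZMod p)ˣ, W i.1 * W i.2 *
        stdAddChar (n * ((i.1 : ZMod p) + (i.2 : ZMod p)) +
          m * (((i.1⁻¹ : (ZMod p)ˣ) : ZMod p) + ((i.2⁻¹ : (ZMod p)ˣ) : ZMod p)))‖ ^ 2 := by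
      intro n m
      rw [show 4 = 2 * 2 from rfl, pow_mul, ← norm_pow, sq (K n m)]
      congr 2
      simp only [hK]
      rw [Finset.sum_mul_sum, Fintype.sum_prod_type]
      refine Finset.sum_congr rfl fun i _ => Finset.sum_congr rfl fun j _ => ?_
      rw [mul_mul_mul_comm, ← AddChar.map_add_eq_mul]
      congr 2; ring
    simp_rw [h2]
    refine h1.trans ?_
    gcongr
    exact count_quads p
  have h3 : ∑ t : (ZMod p)ˣ, ‖K (n * (t ^ 2 : (ZMod p)ˣ)) (m * ((t ^ 2)⁻¹ : (ZMod p)ˣ))‖ ^ 4 ≤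
      2 * ∑ x : ZMod p × ZMod p, ‖K x.1 x.2‖ ^ 4 := by
    let g : (ZMod p)ˣ → ZMod p × ZMod p :=
      fun t => (n * (t ^ 2 : (ZMod p)ˣ), m * ((t ^ 2)⁻¹ : (ZMod p)ˣ))
    have : ∑ t : (ZMod p)ˣ, ‖K (n * (t ^ 2 : (ZMod p)ˣ)) (m * ((t ^ 2)⁻¹ : (ZMod p)ˣ))‖ ^ 4
      = ∑ x : ZMod p × ZMod p, ∑ t with g t = x, ‖K (g t).1 (g t).2‖ ^ 4 :=
      (Finset.sum_fiberwise univ g (fun t => ‖K (g t).1 (g t).2‖ ^ 4)).symm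
    rw [this, Finset.mul_sum]
    refine Finset.sum_le_sum fun x _ => ?_
    have h4 : ∑ t with g t = x, ‖K (g t).1 (g t).2‖ ^ 4 = ∑ t with g t = x, ‖K x.1 x.2‖ ^ 4 :=
      Finset.sum_congr rfl fun t ht => by rw [(mem_filter.mp ht).2]
    rw [h4, Finset.sum_const, nsmul_eq_mul]
    gcongr
    have h5 : #{t | g t = x} ≤ 2 := by
      by_cases hne : ∃ t0, g t0 = x
      · obtain ⟨t0, h0⟩ := hne
        refine (card_le_card (t := {t0, -t0}) ?_).trans card_le_two
        intro t ht
        have h6 := (mem_filter.mp ht).2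
        rw [← h0] at h6
        have h7 : n * ((t ^ 2 : (ZMod p)ˣ) : ZMod p) = n * (t0 ^ 2 : (ZMod p)ˣ) := congrArg Prod.fst h6
        have h8 := mul_left_cancel₀ hn h7
        push_cast at h8
        simp only [mem_insert, mem_singleton]
        rcases sq_eq_sq_iff_eq_or_eq_neg.mp h8 with h | h
        · left; ext; exact h
        · right; ext; push_cast; exact h
      · push Not at hne
        rw [Finset.filter_eq_empty_iff.mpr (fun t _ => hne t)]; simp
    exact_mod_cast h5
  simp_rw [hinv] at h3
  rw [Finset.sum_const, nsmul_eq_mul, card_univ, ZMod.card_units, Fintype.sum_prod_type] at h3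
  have hp1 : ((p - 1 : ℕ) : ℝ) = p - 1 := by push_cast [show 1 ≤ p by omega]; ring
  rw [hp1] at h3
  have hp' : (3 : ℝ) ≤ p := by exact_mod_cast hp
  push_cast at hmom
  change ‖K n m‖ ^ 4 ≤ _
  have h9 : ((p : ℝ) - 1) * ‖K n m‖ ^ 4 ≤ ((p : ℝ) - 1) * (16 * (p : ℝ) ^ 3) := by
    refine h3.trans ?_
    have : (0:ℝ) ≤ (p:ℝ)^3 := by positivity
    nlinarith
  exact le_of_mul_le_mul_left h9 (by linarith)

lemma card_mul_eq_zero_le (N : ℕ) [NeZero N] (c : ℤ) :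
    (univ.filter (fun x : ZMod N => (c : ZMod N) * x = 0)).card ≤ Int.gcd c N := by
  classical
  have hpos : 0 < Int.gcd c N := Int.gcd_pos_of_ne_zero_right _ (by exact_mod_cast NeZero.ne N)
  refine le_trans (card_le_card ?_) (IsAddCyclic.card_nsmul_eq_zero_le (α := ZMod N) hpos)
  intro x hx
  simp only [mem_filter, mem_univ, true_and] at hx ⊢
  have h1 : ((Int.gcd c N : ℤ) : ZMod N) = (c : ZMod N) * (Int.gcdA c N : ℤ) := by
    rw [Int.gcd_eq_gcd_ab]; push_cast; simp
  rw [nsmul_eq_mul]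
  have h2 : ((Int.gcd c N : ℕ) : ZMod N) = (c : ZMod N) * (Int.gcdA c N : ℤ) := by
    rw [← h1]; push_cast; rfl
  rw [h2, mul_right_comm, hx, zero_mul]

lemma isUnit_or_dvd (p s : ℕ) [Fact p.Prime] (x : ZMod (p ^ s)) :
    IsUnit x ∨ (p : ZMod (p ^ s)) ∣ x := by
  have hp : p.Prime := Fact.out
  have : NeZero (p ^ s) := ⟨pow_ne_zero _ hp.ne_zero⟩
  rw [← ZMod.natCast_zmod_val x]
  by_cases h : p ∣ x.val
  · right; exact Nat.cast_dvd_cast h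
  · left
    rw [ZMod.isUnit_iff_coprime]
    exact Nat.Coprime.pow_right _ ((Nat.Prime.coprime_iff_not_dvd hp).mpr h).symm

lemma not_isUnit_p (p s : ℕ) [Fact p.Prime] (hs : s ≠ 0) : ¬ IsUnit (p : ZMod (p ^ s)) := by
  rw [ZMod.isUnit_iff_coprime]
  intro h
  have := (Nat.coprime_pow_right_iff (Nat.pos_of_ne_zero hs) _ _).mp h
  rw [Nat.coprime_self] at this
  exact (Fact.out : p.Prime).one_lt.ne' this

lemma isUnit_two (p s : ℕ) [Fact p.Prime] (hp : 3 ≤ p) : IsUnit (2 : ZMod (p ^ s)) := by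
  have : IsUnit ((2 : ℕ) : ZMod (p ^ s)) := by
    rw [ZMod.isUnit_iff_coprime]
    refine Nat.Coprime.pow_right _ ?_
    rw [Nat.coprime_comm]
    exact (Nat.coprime_primes Fact.out Nat.prime_two).mpr (by omega)
  simpa using this

open ZMod in
lemma stationary (p s k : ℕ) [Fact p.Prime] (hk : s ≤ 2 * k) [NeZero (p ^ s)]
    (V : (ZMod (p ^ s))ˣ → ℂ) (hV : ∀ b, ‖V b‖ ≤ 1)
    (hinv : ∀ b u : (ZMod (p ^ s))ˣ, (p : ZMod (p ^ s)) ^ k ∣ (u : ZMod (p ^ s)) - 1 → V (b * u) = V b)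
    (n m : ZMod (p ^ s)) :
    ‖∑ b : (ZMod (p ^ s))ˣ, V b *
      stdAddChar (n * (b : ZMod (p ^ s)) + m * ((b⁻¹ : (ZMod (p ^ s))ˣ) : ZMod (p ^ s)))‖ ≤
    ((univ.filter (fun b : (ZMod (p ^ s))ˣ => n * (p : ZMod (p ^ s)) ^ k * (b : ZMod (p ^ s)) -
      m * (p : ZMod (p ^ s)) ^ k * ((b⁻¹ : (ZMod (p ^ s))ˣ) : ZMod (p ^ s)) = 0)).card : ℝ) := by
  classical
  have hz : (p : ZMod (p ^ s)) ^ k * (p : ZMod (p ^ s)) ^ k = 0 := by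
    rw [← pow_add, ← Nat.cast_pow, ZMod.natCast_eq_zero_iff]
    exact pow_dvd_pow _ (by omega)
  set P : ZMod (p ^ s) := (p : ZMod (p ^ s)) ^ k with hP
  let u : ZMod (p ^ s) → (ZMod (p ^ s))ˣ := fun t =>
    ⟨1 + P * t, 1 - P * t, by linear_combination (-t ^ 2) * hz, by linear_combination (-t ^ 2) * hz⟩
  set K := ∑ b : (ZMod (p ^ s))ˣ, V b *
      stdAddChar (n * (b : ZMod (p ^ s)) + m * ((b⁻¹ : (ZMod (p ^ s))ˣ) : ZMod (p ^ s))) with hK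
  set D : (ZMod (p ^ s))ˣ → ZMod (p ^ s) := fun b => n * P * (b : ZMod (p ^ s)) -
      m * P * ((b⁻¹ : (ZMod (p ^ s))ˣ) : ZMod (p ^ s)) with hD
  have h1 : ∀ t, K = ∑ b : (ZMod (p ^ s))ˣ, V b *
      stdAddChar (n * (b : ZMod (p ^ s)) + m * ((b⁻¹ : (ZMod (p ^ s))ˣ) : ZMod (p ^ s))) *
      stdAddChar (t * D b) := by
    intro t
    rw [hK]
    symm
    refine Fintype.sum_equiv (Equiv.mulRight (u t)) _ _ fun b => ?_
    rw [Equiv.coe_mulRight, hinv b (u t) ⟨t, by simp [u]⟩, mul_inv, mul_assoc, ← AddChar.map_add_eq_mul]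
    congr 2
    have e1 : ((u t : (ZMod (p ^ s))ˣ) : ZMod (p ^ s)) = 1 + P * t := rfl
    have e2 : (((u t)⁻¹ : (ZMod (p ^ s))ˣ) : ZMod (p ^ s)) = 1 - P * t := rfl
    rw [Units.val_mul, Units.val_mul, e1, e2, hD]
    ring
  have h2 : ((p ^ s : ℕ) : ℂ) * K = ∑ b : (ZMod (p ^ s))ˣ, V b *
      stdAddChar (n * (b : ZMod (p ^ s)) + m * ((b⁻¹ : (ZMod (p ^ s))ˣ) : ZMod (p ^ s))) *
      (if D b = 0 then ((p ^ s : ℕ) : ℂ) else 0) := by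
    have : ((p ^ s : ℕ) : ℂ) * K = ∑ t : ZMod (p ^ s), K := by
      rw [Finset.sum_const, nsmul_eq_mul, card_univ, ZMod.card]
    rw [this, Finset.sum_congr rfl (fun t _ => h1 t), Finset.sum_comm]
    refine Finset.sum_congr rfl fun b _ => ?_
    rw [← Finset.mul_sum, sum_std]
  have hq : (0 : ℝ) < ((p ^ s : ℕ) : ℝ) := by exact_mod_cast Nat.pos_of_ne_zero (NeZero.ne (p ^ s))
  have h3 : ((p ^ s : ℕ) : ℝ) * ‖K‖ ≤ ((p ^ s : ℕ) : ℝ) * (univ.filter (fun b => D b = 0)).card := by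
    have : ((p ^ s : ℕ) : ℝ) * ‖K‖ = ‖((p ^ s : ℕ) : ℂ) * K‖ := by
      rw [norm_mul, Complex.norm_natCast]
    rw [this, h2, Finset.card_filter, Nat.cast_sum, Finset.mul_sum]
    refine (norm_sum_le _ _).trans (Finset.sum_le_sum fun b _ => ?_)
    rw [norm_mul, norm_mul, norm_std, mul_one]
    by_cases hb : D b = 0
    · rw [if_pos hb, if_pos hb, Complex.norm_natCast, Nat.cast_one, mul_one]
      exact mul_le_of_le_one_left hq.le (hV b)
    · rw [if_neg hb, if_neg hb]; simp
  exact le_of_mul_le_mul_left h3 hq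

lemma stat_count (p s k : ℕ) [Fact p.Prime] (hp : 3 ≤ p) (hks : k < s)
    (n m : ℤ) (hnm : ¬ ((p : ℤ) ∣ n ∧ (p : ℤ) ∣ m)) [NeZero (p ^ s)] :
    (univ.filter (fun b : (ZMod (p ^ s))ˣ => (n : ZMod (p ^ s)) * (p : ZMod (p ^ s)) ^ k * (b : ZMod (p ^ s)) -
      (m : ZMod (p ^ s)) * (p : ZMod (p ^ s)) ^ k * ((b⁻¹ : (ZMod (p ^ s))ˣ) : ZMod (p ^ s)) = 0)).card
      ≤ 2 * p ^ k := by
  classical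
  have hpp : p.Prime := Fact.out
  have hs0 : s ≠ 0 := by omega
  set S := (univ.filter (fun b : (ZMod (p ^ s))ˣ => (n : ZMod (p ^ s)) * (p : ZMod (p ^ s)) ^ k * (b : ZMod (p ^ s)) -
      (m : ZMod (p ^ s)) * (p : ZMod (p ^ s)) ^ k * ((b⁻¹ : (ZMod (p ^ s))ˣ) : ZMod (p ^ s)) = 0))
  have hmem : ∀ b ∈ S, (p : ZMod (p ^ s)) ^ k * ((n : ZMod (p ^ s)) * (b : ZMod (p ^ s)) ^ 2 - m) = 0 := by
    intro b hb
    have h := (mem_filter.mp hb).2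
    have hbb := b.mul_inv
    linear_combination (b : ZMod (p ^ s)) * h + (m : ZMod (p ^ s)) * (p : ZMod (p ^ s)) ^ k * hbb
  by_cases hne : ∃ b0, b0 ∈ S
  swap
  · push Not at hne
    rw [Finset.eq_empty_of_forall_notMem hne]; simp
  obtain ⟨b0, hb0⟩ := hne
  have hc0 := hmem b0 hb0
  have hpn : ¬ (p : ℤ) ∣ n := by
    intro hn
    apply hnm
    refine ⟨hn, ?_⟩
    have h1 : (((p : ℤ) ^ k * (n * ((b0 : ZMod (p ^ s)).val : ℤ) ^ 2 - m) : ℤ) : ZMod (p ^ s)) = 0 := by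
      push_cast
      rw [ZMod.natCast_zmod_val]
      exact hc0
    rw [ZMod.intCast_zmod_eq_zero_iff_dvd] at h1
    push_cast at h1
    have h2 : (p : ℤ) ^ k * p ∣ (p : ℤ) ^ k * (n * ((b0 : ZMod (p ^ s)).val : ℤ) ^ 2 - m) :=
      (by rw [← pow_succ]; exact pow_dvd_pow _ hks : (p : ℤ) ^ k * p ∣ (p : ℤ) ^ s).trans h1
    have h3 := Int.dvd_of_mul_dvd_mul_left (by have := hpp.pos; positivity) h2
    exact (dvd_sub_right (hn.mul_right _)).mp h3
  have hnu : IsUnit (n : ZMod (p ^ s)) := by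
    rw [ZMod.coe_int_isUnit_iff_isCoprime]
    push_cast
    exact IsCoprime.pow_left ((Prime.coprime_iff_not_dvd (Nat.prime_iff_prime_int.mp hpp)).mpr hpn)
  have hsub : S.image (fun b : (ZMod (p ^ s))ˣ => (b : ZMod (p ^ s))) ⊆
      (univ.filter (fun x : ZMod (p ^ s) => (((p ^ k : ℕ) : ℤ) : ZMod (p ^ s)) * x = 0)).image (fun x => x + b0) ∪
      (univ.filter (fun x : ZMod (p ^ s) => (((p ^ k : ℕ) : ℤ) : ZMod (p ^ s)) * x = 0)).image (fun x => x - b0) := by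
    intro x hx
    obtain ⟨b, hb, rfl⟩ := mem_image.mp hx
    have hc := hmem b hb
    have h1 : (p : ZMod (p ^ s)) ^ k * (((b : ZMod (p ^ s)) - b0) * (b + b0)) = 0 := by
      apply hnu.mul_left_cancel
      linear_combination hc - hc0
    rw [mem_union, mem_image, mem_image]
    rcases isUnit_or_dvd p s ((b : ZMod (p ^ s)) - b0) with h | h
    · right
      refine ⟨b + b0, ?_, by ring⟩
      simp only [mem_filter, mem_univ, true_and]
      push_cast
      apply h.mul_left_cancel
      linear_combination h1
    rcases isUnit_or_dvd p s ((b : ZMod (p ^ s)) + b0) with h' | h'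
    · left
      refine ⟨b - b0, ?_, by ring⟩
      simp only [mem_filter, mem_univ, true_and]
      push_cast
      apply h'.mul_left_cancel
      linear_combination h1
    · exfalso
      have h2 : (p : ZMod (p ^ s)) ∣ 2 * b := by
        have := dvd_add h h'
        rwa [show (b : ZMod (p ^ s)) - b0 + (b + b0) = 2 * b by ring] at this
      exact not_isUnit_p p s hs0 (isUnit_of_dvd_unit h2 ((isUnit_two p s hp).mul b.isUnit))
  have hz : (univ.filter (fun x : ZMod (p ^ s) => (((p ^ k : ℕ) : ℤ) : ZMod (p ^ s)) * x = 0)).card ≤ p ^ k := by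
    refine (card_mul_eq_zero_le _ _).trans ?_
    rw [Int.gcd_natCast_natCast]
    exact Nat.gcd_le_left _ (pow_pos hpp.pos _)
  have hcard : S.card = (S.image (fun b : (ZMod (p ^ s))ˣ => (b : ZMod (p ^ s)))).card :=
    (card_image_of_injective _ Units.val_injective).symm
  rw [hcard]
  refine (card_le_card hsub).trans ((card_union_le _ _).trans ?_)
  rw [two_mul]
  exact add_le_add (card_image_le.trans hz) (card_image_le.trans hz)

open ZMod in
lemma std_mul_p (p N : ℕ) [NeZero N] [NeZero (p * N)] (h : N ∣ p * N) (x : ZMod (p * N)) :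
    (stdAddChar ((p : ZMod (p * N)) * x) : ℂ) = stdAddChar (castHom h (ZMod N) x) := by
  obtain ⟨z, rfl⟩ := ZMod.intCast_surjective x
  rw [map_intCast, show (p : ZMod (p * N)) * (z : ZMod (p * N)) = ((p * z : ℤ) : ZMod (p * N)) by
    push_cast; rfl, stdAddChar_coe, stdAddChar_coe]
  congr 1
  have h0 : (p : ℂ) * N ≠ 0 := by exact_mod_cast NeZero.ne (p * N)
  have := left_ne_zero_of_mul h0
  have := right_ne_zero_of_mul h0
  push_cast
  field_simp

lemma sum_comp_hom {G H : Type*} [Group G] [Group H] [Fintype G] [Fintype H] (f : G →* H)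
    (hf : Function.Surjective f) : ∃ c : ℕ, Fintype.card G = c * Fintype.card H ∧
      ∀ F : H → ℂ, ∑ g, F (f g) = c * ∑ h, F h := by
  classical
  have hall : ∀ F : H → ℂ, ∑ g, F (f g) = ((univ.filter (fun g => f g = 1)).card : ℂ) * ∑ h, F h := by
    intro F
    rw [← Finset.sum_fiberwise univ f, Finset.mul_sum]
    refine Finset.sum_congr rfl fun h _ => ?_
    rw [Finset.sum_congr rfl (g := fun _ => F h) (fun g hg => by rw [(mem_filter.mp hg).2]),
      Finset.sum_const, nsmul_eq_mul,
      MonoidHom.card_fiber_eq_of_mem_range f (hf h) (hf 1)]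
  refine ⟨_, ?_, hall⟩
  have := hall (fun _ => 1)
  simp only [Finset.sum_const, card_univ, nsmul_eq_mul, mul_one] at this
  exact_mod_cast this

open ZMod in
lemma kloos_reduce (p s : ℕ) [Fact p.Prime] (h1 : p ∣ p ^ (s + 1)) (h2 : p ∣ p ^ (s + 2))
    [NeZero (p ^ (s + 1))] [NeZero (p ^ (s + 2))]
    (W : (ZMod p)ˣ → ℂ) (n m : ℤ) :
    ∑ b : (ZMod (p ^ (s + 2)))ˣ, W (unitsMap h2 b) *
      stdAddChar (((p * n : ℤ) : ZMod (p ^ (s + 2))) * (b : ZMod (p ^ (s + 2))) +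
        ((p * m : ℤ) : ZMod (p ^ (s + 2))) * ((b⁻¹ : (ZMod (p ^ (s + 2)))ˣ) : ZMod (p ^ (s + 2)))) =
    p * ∑ b : (ZMod (p ^ (s + 1)))ˣ, W (unitsMap h1 b) *
      stdAddChar ((n : ZMod (p ^ (s + 1))) * (b : ZMod (p ^ (s + 1))) +
        (m : ZMod (p ^ (s + 1))) * ((b⁻¹ : (ZMod (p ^ (s + 1)))ˣ) : ZMod (p ^ (s + 1)))) := by
  have hpp : p.Prime := Fact.out
  have hd : p ^ (s + 1) ∣ p ^ (s + 2) := pow_dvd_pow _ (by omega)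
  obtain ⟨c, hc, hF⟩ := sum_comp_hom (unitsMap hd) (unitsMap_surjective hd)
  have hcp : c = p := by
    rw [ZMod.card_units_eq_totient, ZMod.card_units_eq_totient,
      Nat.totient_prime_pow_succ hpp, Nat.totient_prime_pow_succ hpp, pow_succ'] at hc
    have : 0 < p ^ s * (p - 1) :=
      Nat.mul_pos (pow_pos hpp.pos _) (Nat.sub_pos_of_lt hpp.one_lt)
    rw [mul_assoc] at hc
    exact (Nat.eq_of_mul_eq_mul_right this hc).symm
  subst hcp
  rw [← hF]
  refine Finset.sum_congr rfl fun b _ => ?_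
  congr 1
  · rw [← MonoidHom.comp_apply, unitsMap_comp]
  · have key : ∀ (M : ℕ) (_ : NeZero M) (hM : M = c * c ^ (s + 1)) (hd : c ^ (s + 1) ∣ M) (x : ZMod M),
        (stdAddChar ((c : ZMod M) * x) : ℂ) = stdAddChar (castHom hd (ZMod (c ^ (s + 1))) x) := by
      intro M _ hM hd x
      subst hM
      exact std_mul_p _ _ _ _
    have k2 := key (c ^ (s + 2)) inferInstance (by ring) hd
      ((n : ZMod (c ^ (s + 2))) * (b : ZMod (c ^ (s + 2))) +
        (m : ZMod (c ^ (s + 2))) * ((b⁻¹ : (ZMod (c ^ (s + 2)))ˣ) : ZMod (c ^ (s + 2))))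
    rw [RingHom.map_add, RingHom.map_mul, RingHom.map_mul, map_intCast, map_intCast] at k2
    rw [← map_inv]
    refine Eq.trans ?_ (k2.trans ?_)
    · congr 1; push_cast; ring
    · rfl

lemma unitsMap_eq_of_dvd (p s : ℕ) [Fact p.Prime] (h : p ∣ p ^ s) (u : (ZMod (p ^ s))ˣ)
    (hu : (p : ZMod (p ^ s)) ∣ (u : ZMod (p ^ s)) - 1) : ZMod.unitsMap h u = 1 := by
  obtain ⟨t, ht⟩ := hu
  ext
  have h2 : (u : ZMod (p ^ s)) = 1 + p * t := by linear_combination ht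
  rw [ZMod.unitsMap_def, Units.coe_map, h2, MonoidHom.coe_coe, RingHom.map_add, RingHom.map_mul,
    map_one, map_natCast]
  simp

open ZMod in
lemma kloos (p : ℕ) [Fact p.Prime] (hp : 3 ≤ p) (W : (ZMod p)ˣ → ℂ) (hW : ∀ b, ‖W b‖ ≤ 1)
    (hsq : ∀ b s, W (b * s ^ 2) = W b) (r : ℕ) (h : p ∣ p ^ (r + 1)) (n m : ℤ) :
    ‖∑ b : (ZMod (p ^ (r + 1)))ˣ, W (unitsMap h b) *
      stdAddChar ((n : ZMod (p ^ (r + 1))) * (b : ZMod (p ^ (r + 1))) +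
        (m : ZMod (p ^ (r + 1))) * ((b⁻¹ : (ZMod (p ^ (r + 1)))ˣ) : ZMod (p ^ (r + 1))))‖ ^ 4 ≤
    16 * ((p : ℝ) ^ (r + 1)) ^ 3 * (Int.gcd n ((p : ℤ) ^ (r + 1)) : ℝ) := by
  have hpp : p.Prime := Fact.out
  have hp0 : (0 : ℝ) < p := by exact_mod_cast hpp.pos
  have hp1 : (1 : ℝ) ≤ p := by exact_mod_cast hpp.one_lt.le
  induction r generalizing n m with
  | zero =>
    by_cases hn : (p : ℤ) ∣ n
    · have hg : Int.gcd n ((p : ℤ) ^ (0 + 1)) = p := by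
        rw [zero_add, pow_one]
        have := Int.gcd_eq_natAbs_right hn
        simpa using this
      rw [hg]
      have hb : ‖∑ b : (ZMod (p ^ (0 + 1)))ˣ, W (unitsMap h b) *
          stdAddChar ((n : ZMod (p ^ (0 + 1))) * (b : ZMod (p ^ (0 + 1))) +
          (m : ZMod (p ^ (0 + 1))) * ((b⁻¹ : (ZMod (p ^ (0 + 1)))ˣ) : ZMod (p ^ (0 + 1))))‖ ≤ p := by
        refine (norm_sum_le _ _).trans ?_
        refine (Finset.sum_le_card_nsmul _ _ 1 (fun b _ => ?_)).trans ?_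
        · rw [norm_mul, norm_std, mul_one]; exact hW _
        · rw [card_univ, ZMod.card_units_eq_totient, nsmul_eq_mul, mul_one]
          have := Nat.totient_le (p ^ (0 + 1))
          exact_mod_cast this.trans (by simp)
      refine (pow_le_pow_left₀ (norm_nonneg _) hb 4).trans ?_
      rw [zero_add, pow_one]
      have : (0 : ℝ) ≤ (p : ℝ) ^ 4 := by positivity
      linarith
    · have key : ∀ q : ℕ, ∀ _ : NeZero q, ∀ h : p ∣ q, q = p → ‖∑ b : (ZMod q)ˣ, W (unitsMap h b) *
          stdAddChar ((n : ZMod q) * (b : ZMod q) +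
          (m : ZMod q) * ((b⁻¹ : (ZMod q)ˣ) : ZMod q))‖ ^ 4 ≤ 16 * (p : ℝ) ^ 3 := by
        intro q _ h hq
        subst hq
        rw [unitsMap_self]
        refine kloos_prime q hp W hW hsq n m ?_
        rwa [Ne, ZMod.intCast_zmod_eq_zero_iff_dvd]
      refine (key _ inferInstance h (by simp)).trans ?_
      rw [zero_add, pow_one]
      have : (1 : ℝ) ≤ (Int.gcd n ((p : ℤ) ^ 1) : ℝ) := by
        exact_mod_cast Int.gcd_pos_of_ne_zero_right _ (by positivity)
      exact le_mul_of_one_le_right (by positivity) (by simpa using this)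
  | succ r ih =>
    by_cases hd : (p : ℤ) ∣ n ∧ (p : ℤ) ∣ m
    · obtain ⟨⟨n', rfl⟩, ⟨m', rfl⟩⟩ := hd
      have : NeZero (p ^ (r + 1)) := ⟨pow_ne_zero _ hpp.ne_zero⟩
      have h1 : p ∣ p ^ (r + 1) := dvd_pow_self _ (by omega)
      have hg : Int.gcd (p * n') ((p : ℤ) ^ (r + 1 + 1)) = p * Int.gcd n' ((p : ℤ) ^ (r + 1)) := by
        rw [pow_succ' _ (r + 1), Int.gcd_mul_left]; simp
      rw [kloos_reduce p r h1 h W n' m', norm_mul, mul_pow, hg, Complex.norm_natCast]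
      refine (mul_le_mul_of_nonneg_left (ih h1 n' m') (by positivity)).trans (le_of_eq ?_)
      push_cast
      ring
    · set k := (r + 1 + 1 + 1) / 2 with hk
      have hst := stationary p (r + 1 + 1) k (by omega) (fun b => W (unitsMap h b)) (fun b => hW _)
        (fun b u hu => by
          rw [map_mul, unitsMap_eq_of_dvd p _ h u
            ((dvd_pow_self _ (by omega)).trans hu), mul_one]) n m
      have hct := stat_count p (r + 1 + 1) k hp (by omega) n m hd
      have hst2 := hst.trans (Nat.cast_le.mpr hct)
      refine (pow_le_pow_left₀ (norm_nonneg _) hst2 4).trans ?_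
      have hg : (1 : ℝ) ≤ (Int.gcd n ((p : ℤ) ^ (r + 1 + 1)) : ℝ) := by
        exact_mod_cast Int.gcd_pos_of_ne_zero_right _ (by positivity)
      refine le_trans ?_ (le_mul_of_one_le_right (by positivity) hg)
      push_cast
      rw [mul_pow, ← pow_mul, ← pow_mul]
      norm_num
      exact pow_le_pow_right₀ hp1 (by omega)

noncomputable def tau (N : ℕ) [NeZero N] (c : ZMod N) : ℂ := ∑ x : ZMod N, ZMod.stdAddChar (c * x ^ 2)

lemma tau_sq (N : ℕ) [NeZero N] (c : ZMod N) (s : (ZMod N)ˣ) : tau N (c * (s : ZMod N) ^ 2) = tau N c := by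
  unfold tau
  refine Fintype.sum_equiv (Units.mulLeft s) _ _ fun x => ?_
  simp only [Units.mulLeft_apply]
  congr 1; ring

lemma tau_bound (N : ℕ) [NeZero N] (h2 : IsUnit (2 : ZMod N)) (z : ℤ) (w : ZMod N) (hw : IsUnit w) :
    ‖tau N (w * z)‖ ^ 2 ≤ (N : ℝ) * (Int.gcd z N : ℝ) := by
  classical
  set c := w * (z : ZMod N) with hc
  have key : ((‖tau N c‖ ^ 2 : ℝ) : ℂ) = ∑ h : ZMod N, ZMod.stdAddChar (c * h ^ 2) *
      (if 2 * c * h = 0 then (N : ℂ) else 0) := by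
    push_cast
    rw [← Complex.mul_conj', mul_comm]
    unfold tau
    rw [map_sum, Finset.sum_mul]
    have h1 : ∀ y : ZMod N, (starRingEnd ℂ) (ZMod.stdAddChar (c * y ^ 2)) *
        ∑ x : ZMod N, ZMod.stdAddChar (c * x ^ 2) =
        ∑ h : ZMod N, ZMod.stdAddChar (c * h ^ 2) * ZMod.stdAddChar (y * (2 * c * h)) := by
      intro y
      rw [Finset.mul_sum]
      symm
      refine Fintype.sum_equiv (Equiv.addRight y) _ _ fun h => ?_
      rw [← AddChar.map_neg_eq_conj, ← AddChar.map_add_eq_mul, ← AddChar.map_add_eq_mul,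
        Equiv.coe_addRight]
      congr 1; ring
    simp_rw [h1]
    rw [Finset.sum_comm]
    refine Finset.sum_congr rfl fun h _ => ?_
    rw [← Finset.mul_sum, sum_std]
  have hn : ∀ R : ℝ, R ≤ ‖(R : ℂ)‖ := fun R => by
    rw [Complex.norm_real]; exact le_abs_self R
  refine (hn _).trans ?_
  rw [key]
  refine (norm_sum_le _ _).trans ?_
  have hcard := card_mul_eq_zero_le N z
  refine le_trans ?_ (mul_le_mul_of_nonneg_left (Nat.cast_le.mpr hcard) (Nat.cast_nonneg N))
  rw [Finset.card_filter, Nat.cast_sum, Finset.mul_sum]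
  refine Finset.sum_le_sum fun h _ => ?_
  rw [norm_mul, norm_std, one_mul]
  have : 2 * c * h = 0 ↔ (z : ZMod N) * h = 0 := by
    rw [hc, show 2 * (w * (z : ZMod N)) * h = (2 * w) * (z * h) by ring]
    exact (h2.mul hw).mul_right_eq_zero
  simp only [this]
  split_ifs <;> simp

lemma complete_square (N : ℕ) [NeZero N] (i2 : ZMod N) (h2 : 2 * i2 = 1) (D w c c' : ZMod N)
    (hc : c * c' = 1) :
    ∑ y : ZMod N, (ZMod.stdAddChar (c * D * y ^ 2 + D * w * y) : ℂ) =
      ZMod.stdAddChar (-(D * w ^ 2 * i2 ^ 2 * c')) * tau N (c * D) := by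
  unfold tau
  rw [Finset.mul_sum]
  refine Fintype.sum_equiv (Equiv.addRight (w * i2 * c')) _ _ fun y => ?_
  rw [Equiv.coe_addRight, ← AddChar.map_add_eq_mul]
  congr 1
  linear_combination (-(D * w ^ 2 * i2 ^ 2 * c') - 2 * D * w * i2 * y) * hc  - D * w * y * h2

lemma linear_vanish (N : ℕ) [NeZero N] (z : ℤ) (v : ZMod N)
    (hv : ¬ ∃ w, v = (z : ZMod N) * w) (c : ZMod N) :
    ∑ y : ZMod N, (ZMod.stdAddChar (c * (z : ZMod N) * y ^ 2 + (v : ZMod N) * y) : ℂ) = 0 := by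
  obtain ⟨v, rfl⟩ := ZMod.intCast_surjective v
  have hN : (N : ℤ) ≠ 0 := by exact_mod_cast NeZero.ne N
  have hg0 : (Int.gcd z N : ℤ) ≠ 0 := by
    exact_mod_cast (Int.gcd_pos_of_ne_zero_right z hN).ne'
  obtain ⟨h, hh⟩ := Int.gcd_dvd_right (a := z) (b := N)
  obtain ⟨z', hz'⟩ := Int.gcd_dvd_left (a := z) (b := N)
  have hzh : (z : ZMod N) * (h : ZMod N) = 0 := by
    rw [← Int.cast_mul, ZMod.intCast_zmod_eq_zero_iff_dvd]
    refine ⟨z', ?_⟩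
    linear_combination h * hz' - z' * hh
  have hvh : (v : ZMod N) * (h : ZMod N) ≠ 0 := by
    intro h0
    apply hv
    rw [← Int.cast_mul, ZMod.intCast_zmod_eq_zero_iff_dvd] at h0
    obtain ⟨t, ht⟩ := h0
    have hh0 : h ≠ 0 := by rintro rfl; simp at hh; exact hN (by exact_mod_cast hh)
    have hvg : v = Int.gcd z N * t := by
      apply mul_right_cancel₀ hh0
      linear_combination ht + t * hh
    refine ⟨(Int.gcdA z N : ℤ) * t, ?_⟩
    rw [hvg, Int.gcd_eq_gcd_ab]; push_cast; simp [mul_assoc]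
  set T := ∑ y : ZMod N, (ZMod.stdAddChar (c * (z : ZMod N) * y ^ 2 + (v : ZMod N) * y) : ℂ) with hT
  have h1 : T = ZMod.stdAddChar ((v : ZMod N) * (h : ZMod N)) * T := by
    conv_lhs => rw [hT]
    rw [hT, Finset.mul_sum]
    symm
    refine Fintype.sum_equiv (Equiv.addRight (h : ZMod N)) _ _ fun y => ?_
    rw [Equiv.coe_addRight, ← AddChar.map_add_eq_mul]
    congr 1
    linear_combination (-(c * h) - 2 * c * y) * hzh
  by_contra hT0
  have h3 : (ZMod.stdAddChar ((v : ZMod N) * (h : ZMod N)) : ℂ) = 1 := by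
    apply mul_right_cancel₀ hT0
    rw [one_mul]; exact h1.symm
  apply hvh
  apply ZMod.injective_stdAddChar
  rw [h3, AddChar.map_zero_eq_one]

lemma form_eval (N : ℕ) [NeZero N] (i2 : ZMod N) (h2 : 2 * i2 = 1) (A B C u v A' : ZMod N) (z : ℤ)
    (hA : A * A' = 1) (hdet : A * C - B ^ 2 = z) :
    ∃ κ : ZMod N, ∃ δ : ℂ, ‖δ‖ ≤ 1 ∧ ∀ b : (ZMod N)ˣ,
      ∑ x : ZMod N, ∑ y : ZMod N, (ZMod.stdAddChar
        ((b : ZMod N) * (A * x ^ 2 + 2 * B * x * y + C * y ^ 2) + u * x + v * y) : ℂ) =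
      δ * ZMod.stdAddChar (κ * ((b⁻¹ : (ZMod N)ˣ) : ZMod N)) *
        (tau N ((b : ZMod N) * A) * tau N ((b : ZMod N) * A' * (z : ZMod N))) := by
  have hsplit : ∀ b : (ZMod N)ˣ,
      ∑ x : ZMod N, ∑ y : ZMod N, (ZMod.stdAddChar
        ((b : ZMod N) * (A * x ^ 2 + 2 * B * x * y + C * y ^ 2) + u * x + v * y) : ℂ) =
      (∑ x : ZMod N, (ZMod.stdAddChar ((b : ZMod N) * A * 1 * x ^ 2 + 1 * u * x) : ℂ)) *
      ∑ y : ZMod N, (ZMod.stdAddChar ((b : ZMod N) * A' * (z : ZMod N) * y ^ 2 + (v - A' * B * u) * y) : ℂ) := by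
    intro b
    rw [Finset.sum_comm, Finset.sum_mul_sum, Finset.sum_comm (γ := ZMod N)]
    rw [Finset.sum_comm]
    conv_rhs => rw [Finset.sum_comm]
    refine Finset.sum_congr rfl fun y _ => ?_
    refine Fintype.sum_equiv (Equiv.addRight (A' * B * y)) _ _ fun x => ?_
    rw [Equiv.coe_addRight, ← AddChar.map_add_eq_mul]
    congr 1
    have hC : C = A' * (B ^ 2 + z) := by linear_combination A' * hdet - C * hA
    rw [hC]
    linear_combination (-(2 * b * B * x * y) - b * A' * B ^ 2 * y ^ 2) * hA
  by_cases hv : ∃ w, v - A' * B * u = (z : ZMod N) * w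
  · obtain ⟨w, hw⟩ := hv
    refine ⟨-(1 * u ^ 2 * i2 ^ 2 * A') + -(z * w ^ 2 * i2 ^ 2 * A), 1, by simp, fun b => ?_⟩
    have hb := b.mul_inv
    rw [hsplit, hw, complete_square N i2 h2 1 u ((b : ZMod N) * A) (A' * ((b⁻¹ : (ZMod N)ˣ) : ZMod N))
      (by linear_combination A * A' * hb + hA),
      complete_square N i2 h2 z w ((b : ZMod N) * A') (A * ((b⁻¹ : (ZMod N)ˣ) : ZMod N))
      (by linear_combination A * A' * hb + hA), mul_mul_mul_comm, ← AddChar.map_add_eq_mul, one_mul,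
      mul_one ((b : ZMod N) * A)]
    congr 2
    ring
  · refine ⟨0, 0, by simp, fun b => ?_⟩
    rw [hsplit, linear_vanish N z _ hv]; simp

lemma sum_range_zmod (N : ℕ) [NeZero N] (F : ZMod N → ℂ) :
    ∑ x ∈ Finset.range N, F (x : ZMod N) = ∑ x : ZMod N, F x := by
  refine Finset.sum_bij' (fun x _ => (x : ZMod N)) (fun x _ => x.val) ?_ ?_ ?_ ?_ ?_
  · intros; exact mem_univ _
  · intro x _; exact mem_range.mpr (ZMod.val_lt x)
  · intro x hx; exact ZMod.val_cast_of_lt (mem_range.mp hx)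
  · intro x _; exact ZMod.natCast_zmod_val x
  · intros; rfl

lemma sum_units_zmod (p r : ℕ) [Fact p.Prime] (hr : r ≠ 0) [NeZero (p ^ r)] (F : ZMod (p ^ r) → ℂ) :
    ∑ b ∈ (Finset.Icc 1 (p ^ r)).filter (fun b => Nat.gcd b p = 1), F (b : ZMod (p ^ r)) =
      ∑ b : (ZMod (p ^ r))ˣ, F b := by
  have hpp : p.Prime := Fact.out
  symm
  refine Finset.sum_bij (fun b _ => (b : ZMod (p ^ r)).val) ?_ ?_ ?_ ?_
  · intro b _
    have hco := ZMod.val_coe_unit_coprime b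
    have hcp : Nat.Coprime (b : ZMod (p ^ r)).val p := Nat.Coprime.coprime_dvd_right (dvd_pow_self p hr) hco
    rw [mem_filter, mem_Icc]
    refine ⟨⟨?_, (ZMod.val_lt _).le⟩, hcp⟩
    by_contra h0
    have : (b : ZMod (p ^ r)).val = 0 := by omega
    rw [this, Nat.coprime_zero_left] at hcp
    exact hpp.one_lt.ne' hcp
  · intro b _ c _ h
    ext
    exact ZMod.val_injective _ h
  · intro b hb
    rw [mem_filter, mem_Icc] at hb
    have hlt : b < p ^ r := by
      refine lt_of_le_of_ne hb.1.2 ?_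
      rintro rfl
      have : p ∣ Nat.gcd (p ^ r) p := Nat.dvd_gcd (dvd_pow_self p hr) dvd_rfl
      rw [hb.2] at this
      exact hpp.one_lt.ne' (Nat.dvd_one.mp this)
    refine ⟨ZMod.unitOfCoprime b (Nat.Coprime.pow_right _ hb.2), mem_univ _, ?_⟩
    rw [ZMod.coe_unitOfCoprime, ZMod.val_cast_of_lt hlt]
  · intro b _
    rw [ZMod.natCast_zmod_val]

lemma square_of_one (p s : ℕ) [Fact p.Prime] (hp : Odd p) (h : p ∣ p ^ s) (u : (ZMod (p ^ s))ˣ)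
    (hu : ZMod.unitsMap h u = 1) : ∃ v, u = v ^ 2 := by
  have hd : (p : ZMod (p ^ s)) ∣ (u : ZMod (p ^ s)) - 1 := by
    obtain ⟨z, hz⟩ := ZMod.intCast_surjective (u : ZMod (p ^ s))
    have h1 := congrArg (fun x : (ZMod p)ˣ => (x : ZMod p)) hu
    simp only [ZMod.unitsMap_def, Units.coe_map, ← hz, MonoidHom.coe_coe, map_intCast, Units.val_one] at h1
    have h2 : ((z - 1 : ℤ) : ZMod p) = 0 := by push_cast; rw [h1]; ring
    rw [ZMod.intCast_zmod_eq_zero_iff_dvd] at h2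
    obtain ⟨t, ht⟩ := h2
    rw [← hz]
    refine ⟨(t : ZMod (p ^ s)), ?_⟩
    have := congrArg (fun x : ℤ => (x : ZMod (p ^ s))) ht
    push_cast at this
    exact this
  have h3 := dvd_sub_pow_of_dvd_sub hd s
  have h4 : (p : ZMod (p ^ s)) ^ (s + 1) = 0 := by
    rw [← Nat.cast_pow, ZMod.natCast_eq_zero_iff]; exact pow_dvd_pow _ (by omega)
  rw [h4, zero_dvd_iff, one_pow, sub_eq_zero] at h3
  have h5 : u ^ (p ^ s) = 1 := by ext; push_cast; exact h3
  obtain ⟨m, hm⟩ := hp.pow (n := s)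
  refine ⟨u ^ (m + 1), ?_⟩
  have h6 : ∀ k, k = p ^ s → u ^ k = 1 := by rintro k rfl; exact h5
  have h7 := h6 _ hm.symm
  calc u = u * u ^ (2 * m + 1) := by rw [h7, mul_one]
    _ = (u ^ (m + 1)) ^ 2 := by rw [← pow_succ', ← pow_mul]; congr 1; ring

lemma eChar_eq (N : ℕ) [NeZero N] (x : ℤ) : eChar N x = ZMod.stdAddChar (x : ZMod N) := by
  rw [ZMod.stdAddChar_coe]; rfl

lemma Sform_eq (N : ℕ) [NeZero N] (A B C a b u v : ℤ) :
    Sform N A B C a b u v = ((N : ℂ) ^ 2)⁻¹ * (ZMod.stdAddChar (-((a : ZMod N) * (b : ZMod N))) *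
      ∑ x : ZMod N, ∑ y : ZMod N, ZMod.stdAddChar
        ((b : ZMod N) * ((A : ZMod N) * x ^ 2 + 2 * (B : ZMod N) * x * y + (C : ZMod N) * y ^ 2) +
          (u : ZMod N) * x + (v : ZMod N) * y)) := by
  unfold Sform
  congr 1
  rw [← sum_range_zmod, Finset.mul_sum]
  refine Finset.sum_congr rfl fun x _ => ?_
  rw [← sum_range_zmod, Finset.mul_sum]
  refine Finset.sum_congr rfl fun y _ => ?_
  rw [eChar_eq, ← AddChar.map_add_eq_mul]
  congr 1
  push_cast
  ring

open ZMod in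
lemma descend (p r : ℕ) [Fact p.Prime] (hp : Odd p) (h : p ∣ p ^ r) [NeZero (p ^ r)]
    (V : (ZMod (p ^ r))ˣ → ℂ) (hsq : ∀ b s, V (b * s ^ 2) = V b) :
    ∃ W : (ZMod p)ˣ → ℂ, (∀ c s, W (c * s ^ 2) = W c) ∧ (∀ c, ∃ b, W c = V b) ∧
      ∀ b, V b = W (unitsMap h b) := by
  have hsurj := unitsMap_surjective h
  have hV : ∀ b c, unitsMap h b = unitsMap h c → V b = V c := by
    intro b c hbc
    obtain ⟨s, hs⟩ := square_of_one p r hp h (c⁻¹ * b) (by rw [map_mul, map_inv, hbc, inv_mul_cancel])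
    have : b = c * s ^ 2 := by rw [← hs]; group
    rw [this, hsq]
  have hl := Function.surjInv_eq hsurj
  refine ⟨fun c => V (Function.surjInv hsurj c), fun c s => ?_, fun c => ⟨_, rfl⟩, fun b => ?_⟩
  · dsimp only
    rw [← hsq (Function.surjInv hsurj c) (Function.surjInv hsurj s)]
    apply hV
    rw [map_mul, map_pow, hl, hl, hl]
  · apply hV
    rw [hl]

lemma final_algebra (N : ℕ) (M : ℝ) (hM : M ≠ 0) (e₁ δ k₁ t e₂ δ₁ k₂ t₁ : ℂ) :
    (((N : ℂ) ^ 2)⁻¹ * (e₁ * (δ * k₁ * t))) *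
      (starRingEnd ℂ) (((N : ℂ) ^ 2)⁻¹ * (e₂ * (δ₁ * k₂ * t₁))) =
    ((((N : ℝ) ^ 2)⁻¹ * ((N : ℝ) ^ 2)⁻¹ * M : ℝ) : ℂ) * (δ * (starRingEnd ℂ) δ₁) *
      (((M : ℂ)⁻¹ * (t * (starRingEnd ℂ) t₁)) *
        (e₁ * k₁ * ((starRingEnd ℂ) e₂ * (starRingEnd ℂ) k₂))) := by
  have hM0 : (M : ℂ) ≠ 0 := by exact_mod_cast hM
  have h1 := mul_inv_cancel₀ hM0
  simp only [map_mul, map_inv₀, map_pow, map_natCast]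
  push_cast
  linear_combination (-(((N : ℂ) ^ 2)⁻¹ * ((N : ℂ) ^ 2)⁻¹ * δ * (starRingEnd ℂ) δ₁ *
    t * (starRingEnd ℂ) t₁ * e₁ * k₁ * (starRingEnd ℂ) e₂ * (starRingEnd ℂ) k₂)) * h1

set_option maxHeartbeats 1000000 in
open ZMod in
lemma main_bound (p r : ℕ) [Fact p.Prime] (hodd : Odd p) [NeZero (p ^ (r + 1))]
    (A B C A₁ B₁ C₁ a a₁ u v u₁ v₁ : ℤ)
    (hA : ¬ (p : ℤ) ∣ A) (hA₁ : ¬ (p : ℤ) ∣ A₁)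
    (hdet : A * C - B ^ 2 = a ^ 2) (hdet₁ : A₁ * C₁ - B₁ ^ 2 = a₁ ^ 2) :
    ‖∑ b ∈ (Finset.Icc 1 (p ^ (r + 1))).filter (fun b => Nat.gcd b p = 1),
      Sform (p ^ (r + 1)) A B C a b u v *
        (starRingEnd ℂ) (Sform (p ^ (r + 1)) A₁ B₁ C₁ a₁ b u₁ v₁)‖ ≤
    (((p : ℝ) ^ (r + 1)) ^ 2)⁻¹ * (√(Int.gcd (a ^ 2) ((p : ℤ) ^ (r + 1)) : ℝ) *
      √(Int.gcd (a₁ ^ 2) ((p : ℤ) ^ (r + 1)) : ℝ)) *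
      (16 * ((p : ℝ) ^ (r + 1)) ^ 3 * (Int.gcd (a - a₁) ((p : ℤ) ^ (r + 1)) : ℝ)) ^ ((1 : ℝ) / 4) := by
  have hpp : p.Prime := Fact.out
  have hp3 : 3 ≤ p := by
    rcases hodd with ⟨k, hk⟩
    have := hpp.two_le
    omega
  set N := p ^ (r + 1) with hN
  have hNr : ((p : ℝ) ^ (r + 1)) = (N : ℝ) := by rw [hN]; push_cast; rfl
  have hNz : ((p : ℤ) ^ (r + 1)) = (N : ℤ) := by rw [hN]; push_cast; rfl
  have hN0 : (0 : ℝ) < N := by exact_mod_cast Nat.pos_of_ne_zero (NeZero.ne N)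
  have hu2 : IsUnit (2 : ZMod N) := isUnit_two p (r + 1) hp3
  have hunit : ∀ A : ℤ, ¬ (p : ℤ) ∣ A → IsUnit (A : ZMod N) := by
    intro A hA
    rw [ZMod.coe_int_isUnit_iff_isCoprime, ← hNz]
    exact IsCoprime.pow_left ((Prime.coprime_iff_not_dvd (Nat.prime_iff_prime_int.mp hpp)).mpr hA)
  obtain ⟨i2, hi2⟩ := hu2.exists_right_inv
  obtain ⟨A', hA'⟩ := (hunit A hA).exists_right_inv
  obtain ⟨A₁', hA₁'⟩ := (hunit A₁ hA₁).exists_right_inv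
  have hdet' : (A : ZMod N) * C - (B : ZMod N) ^ 2 = ((a ^ 2 : ℤ) : ZMod N) := by
    rw [← hdet]; push_cast; rfl
  have hdet₁' : (A₁ : ZMod N) * C₁ - (B₁ : ZMod N) ^ 2 = ((a₁ ^ 2 : ℤ) : ZMod N) := by
    rw [← hdet₁]; push_cast; rfl
  obtain ⟨κ, δ, hδ, hF⟩ := form_eval N i2 hi2 A B C u v A' (a ^ 2) hA' hdet'
  obtain ⟨κ₁, δ₁, hδ₁, hF₁⟩ := form_eval N i2 hi2 A₁ B₁ C₁ u₁ v₁ A₁' (a₁ ^ 2) hA₁' hdet₁'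
  set g := Int.gcd (a ^ 2) ((p : ℤ) ^ (r + 1)) with hg
  set g₁ := Int.gcd (a₁ ^ 2) ((p : ℤ) ^ (r + 1)) with hg₁
  have hgpos : (0 : ℝ) < g := by
    exact_mod_cast Int.gcd_pos_of_ne_zero_right _ (by positivity)
  have hg₁pos : (0 : ℝ) < g₁ := by
    exact_mod_cast Int.gcd_pos_of_ne_zero_right _ (by positivity)
  -- the weight
  let V₀ : (ZMod N)ˣ → ℂ := fun b =>
    (tau N ((b : ZMod N) * A) * tau N ((b : ZMod N) * A' * ((a ^ 2 : ℤ) : ZMod N))) *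
    (starRingEnd ℂ) (tau N ((b : ZMod N) * A₁) * tau N ((b : ZMod N) * A₁' * ((a₁ ^ 2 : ℤ) : ZMod N)))
  set M : ℝ := (N : ℝ) ^ 2 * (√g * √g₁) with hM
  have hMpos : 0 < M := by positivity
  have t1 : ∀ (b : (ZMod N)ˣ) (A : ℤ), ¬ (p : ℤ) ∣ A → ‖tau N ((b : ZMod N) * A)‖ ≤ √N := by
    intro b A hA
    apply Real.le_sqrt_of_sq_le
    have := tau_bound N hu2 1 ((b : ZMod N) * A) (b.isUnit.mul (hunit A hA))
    simpa using this
  have t2 : ∀ (b : (ZMod N)ˣ) (A' : ZMod N) (z : ℤ), IsUnit A' →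
      ‖tau N ((b : ZMod N) * A' * (z : ZMod N))‖ ≤ √N * √(Int.gcd z ((p : ℤ) ^ (r + 1)) : ℝ) := by
    intro b A' z hA'
    rw [← Real.sqrt_mul hN0.le]
    apply Real.le_sqrt_of_sq_le
    have := tau_bound N hu2 z ((b : ZMod N) * A') (b.isUnit.mul hA')
    rw [hNz]
    exact this
  have hA'u : IsUnit A' := IsUnit.of_mul_eq_one (A : ZMod N) (by rw [mul_comm]; exact hA')
  have hA₁'u : IsUnit A₁' := IsUnit.of_mul_eq_one (A₁ : ZMod N) (by rw [mul_comm]; exact hA₁')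
  have hV₀ : ∀ b, ‖V₀ b‖ ≤ M := by
    intro b
    simp only [V₀]
    rw [norm_mul, RCLike.norm_conj, norm_mul, norm_mul]
    have e1 : M = (√N * (√N * √g)) * (√N * (√N * √g₁)) := by
      have : √(N : ℝ) * √N = N := Real.mul_self_sqrt hN0.le
      rw [hM]
      linear_combination (-(√g * √g₁) * (√(N : ℝ) * √N + N)) * this
    rw [e1]
    have a1 := t1 b A hA
    have a2 := t2 b A' (a ^ 2) hA'u
    have a3 := t1 b A₁ hA₁
    have a4 := t2 b A₁' (a₁ ^ 2) hA₁'u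
    gcongr
  let V : (ZMod N)ˣ → ℂ := fun b => (M : ℂ)⁻¹ * V₀ b
  have hVsq : ∀ b s, V (b * s ^ 2) = V b := by
    intro b s
    have e : ∀ c : ZMod N, tau N (((b * s ^ 2 : (ZMod N)ˣ) : ZMod N) * c) = tau N ((b : ZMod N) * c) := by
      intro c
      rw [← tau_sq N ((b : ZMod N) * c) s]
      congr 1; push_cast; ring
    simp only [V, V₀, mul_assoc _ A', mul_assoc _ A₁', e]
  have hd : p ∣ p ^ (r + 1) := dvd_pow_self _ (by omega)
  obtain ⟨W, hWsq, hWV, hVW⟩ := descend p (r + 1) hodd hd V hVsq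
  have hW : ∀ c, ‖W c‖ ≤ 1 := by
    intro c
    obtain ⟨b, hb⟩ := hWV c
    rw [hb]
    simp only [V]
    rw [norm_mul, norm_inv, Complex.norm_real, Real.norm_of_nonneg hMpos.le]
    rw [inv_mul_le_iff₀ hMpos, mul_one]
    exact hV₀ b
  obtain ⟨m, hm⟩ := ZMod.intCast_surjective (κ - κ₁)
  have hK := kloos p hp3 W hW hWsq r hd (-(a - a₁)) m
  rw [Int.neg_gcd] at hK
  set K := ∑ b : (ZMod (p ^ (r + 1)))ˣ, W (unitsMap hd b) *
      stdAddChar (((-(a - a₁) : ℤ) : ZMod (p ^ (r + 1))) * (b : ZMod (p ^ (r + 1))) +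
        (m : ZMod (p ^ (r + 1))) * ((b⁻¹ : (ZMod (p ^ (r + 1)))ˣ) : ZMod (p ^ (r + 1)))) with hKdef
  have hsum : ∑ b ∈ (Finset.Icc 1 N).filter (fun b => Nat.gcd b p = 1),
      Sform N A B C a b u v * (starRingEnd ℂ) (Sform N A₁ B₁ C₁ a₁ b u₁ v₁) =
      ((((N : ℝ) ^ 2)⁻¹ * ((N : ℝ) ^ 2)⁻¹ * M : ℝ) : ℂ) * (δ * (starRingEnd ℂ) δ₁) * K := by
    have hS : ∀ (A B C a u v : ℤ) (b : ℕ), Sform N A B C a b u v =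
        (fun b : ZMod N => ((N : ℂ) ^ 2)⁻¹ * (stdAddChar (-((a : ZMod N) * b)) *
      ∑ x : ZMod N, ∑ y : ZMod N, stdAddChar
        (b * ((A : ZMod N) * x ^ 2 + 2 * (B : ZMod N) * x * y + (C : ZMod N) * y ^ 2) +
          (u : ZMod N) * x + (v : ZMod N) * y))) (b : ZMod N) := by
      intro A B C a u v b
      rw [Sform_eq]
      push_cast
      rfl
    simp_rw [hS]
    rw [sum_units_zmod p (r + 1) (by omega) (fun b : ZMod N => (((N : ℂ) ^ 2)⁻¹ * (stdAddChar (-((a : ZMod N) * b)) *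
      ∑ x : ZMod N, ∑ y : ZMod N, stdAddChar
        (b * ((A : ZMod N) * x ^ 2 + 2 * (B : ZMod N) * x * y + (C : ZMod N) * y ^ 2) +
          (u : ZMod N) * x + (v : ZMod N) * y))) * (starRingEnd ℂ) (((N : ℂ) ^ 2)⁻¹ * (stdAddChar (-((a₁ : ZMod N) * b)) *
      ∑ x : ZMod N, ∑ y : ZMod N, stdAddChar
        (b * ((A₁ : ZMod N) * x ^ 2 + 2 * (B₁ : ZMod N) * x * y + (C₁ : ZMod N) * y ^ 2) +
          (u₁ : ZMod N) * x + (v₁ : ZMod N) * y))))]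
    rw [hKdef, Finset.mul_sum]
    refine Finset.sum_congr rfl fun b _ => ?_
    have hM0 : (M : ℂ) ≠ 0 := by exact_mod_cast hMpos.ne'
    rw [hF, hF₁, ← hVW, hm]
    have hchar : (stdAddChar (((-(a - a₁) : ℤ) : ZMod N) * (b : ZMod N) +
        (κ - κ₁) * ((b⁻¹ : (ZMod N)ˣ) : ZMod N)) : ℂ) =
        stdAddChar (-((a : ZMod N) * (b : ZMod N))) * stdAddChar (κ * ((b⁻¹ : (ZMod N)ˣ) : ZMod N)) *
        ((starRingEnd ℂ) (stdAddChar (-((a₁ : ZMod N) * (b : ZMod N)))) *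
          (starRingEnd ℂ) (stdAddChar (κ₁ * ((b⁻¹ : (ZMod N)ˣ) : ZMod N)))) := by
      rw [← AddChar.map_neg_eq_conj, ← AddChar.map_neg_eq_conj, ← AddChar.map_add_eq_mul,
        ← AddChar.map_add_eq_mul, ← AddChar.map_add_eq_mul]
      congr 1
      push_cast
      ring
    rw [hchar]
    exact final_algebra N M hMpos.ne' _ _ _ _ _ _ _ _
  rw [hsum, norm_mul, norm_mul, Complex.norm_real, Real.norm_of_nonneg (by positivity), hNr]
  rw [hNr] at hK
  have hK' : ‖K‖ ≤ (16 * (N : ℝ) ^ 3 * (Int.gcd (a - a₁) ((p : ℤ) ^ (r + 1)) : ℝ)) ^ ((1 : ℝ) / 4) := by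
    have h1 : ‖K‖ = (‖K‖ ^ 4) ^ ((1 : ℝ) / 4) := by
      rw [← Real.rpow_natCast, ← Real.rpow_mul (norm_nonneg _)]; norm_num
    rw [h1]
    exact Real.rpow_le_rpow (by positivity) hK (by norm_num)
  have hδδ : ‖δ * (starRingEnd ℂ) δ₁‖ ≤ 1 := by
    rw [norm_mul, RCLike.norm_conj]
    exact mul_le_one₀ hδ (norm_nonneg _) hδ₁
  have hMM : ((N : ℝ) ^ 2)⁻¹ * ((N : ℝ) ^ 2)⁻¹ * M = ((N : ℝ) ^ 2)⁻¹ * (√g * √g₁) := by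
    rw [hM]; field_simp
  rw [hMM]
  refine mul_le_mul ?_ hK' (norm_nonneg _) (by positivity)
  exact mul_le_of_le_one_right (by positivity) hδδ

/-- Bound for the `b`-average of products of two normalized Gauss sums: for `q = p^r` odd
prime power, it is `≤ C gcd(a²,q)^{1/2} gcd(a₁²,q)^{1/2} gcd(a−a₁,q)^{1/4} q^{−5/4}`. -/
theorem gauss_sum_correlation_bound :
    ∃ C₀ : ℝ, ∀ p r : ℕ, p.Prime → Odd p → 1 ≤ r →
      ∀ A B C A₁ B₁ C₁ a a₁ u v u₁ v₁ : ℤ,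
        ¬ (p : ℤ) ∣ A → ¬ (p : ℤ) ∣ A₁ → a ≠ 0 → a₁ ≠ 0 →
        A * C - B ^ 2 = a ^ 2 → A₁ * C₁ - B₁ ^ 2 = a₁ ^ 2 →
        norm (∑ b ∈ (Finset.Icc 1 (p ^ r)).filter (fun b => Nat.gcd b p = 1),
            Sform (p ^ r) A B C a b u v *
              (starRingEnd ℂ) (Sform (p ^ r) A₁ B₁ C₁ a₁ b u₁ v₁))
          ≤ C₀ * ((Int.gcd (a ^ 2) ((p : ℤ) ^ r) : ℝ)) ^ ((1 : ℝ) / 2) *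
              ((Int.gcd (a₁ ^ 2) ((p : ℤ) ^ r) : ℝ)) ^ ((1 : ℝ) / 2) *
              ((Int.gcd (a - a₁) ((p : ℤ) ^ r) : ℝ)) ^ ((1 : ℝ) / 4) *
              ((p : ℝ) ^ r) ^ (-(5 : ℝ) / 4) := by
  refine ⟨2, ?_⟩
  intro p r hp hodd hr A B C A₁ B₁ C₁ a a₁ u v u₁ v₁ hA hA₁ _ _ hdet hdet₁
  have : Fact p.Prime := ⟨hp⟩
  obtain ⟨r, rfl⟩ : ∃ s, r = s + 1 := ⟨r - 1, by omega⟩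
  have : NeZero (p ^ (r + 1)) := ⟨pow_ne_zero _ hp.ne_zero⟩
  refine (main_bound p r hodd A B C A₁ B₁ C₁ a a₁ u v u₁ v₁ hA hA₁ hdet hdet₁).trans (le_of_eq ?_)
  have hp0 : (0 : ℝ) < p := by exact_mod_cast hp.pos
  have hq : (0 : ℝ) < (p : ℝ) ^ (r + 1) := by positivity
  generalize (p : ℝ) ^ (r + 1) = q at hq
  rw [Real.sqrt_eq_rpow, Real.sqrt_eq_rpow, Real.mul_rpow (by positivity) (by positivity),
    Real.mul_rpow (by positivity) (by positivity)]
  have h16 : (16 : ℝ) ^ ((1 : ℝ) / 4) = 2 := by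
    rw [show (16 : ℝ) = 2 ^ (4 : ℝ) by norm_num, ← Real.rpow_mul (by norm_num)]; norm_num
  have hqq : (q ^ 2)⁻¹ * (q ^ 3) ^ ((1 : ℝ) / 4) = q ^ (-(5 : ℝ) / 4) := by
    rw [← Real.rpow_natCast, ← Real.rpow_natCast, ← Real.rpow_neg hq.le, ← Real.rpow_mul hq.le,
      ← Real.rpow_add hq]
    norm_num
  rw [h16, ← hqq]
  ring
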